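/- arXiv:0904.2302 — 10 statements merged into one kernel-verified Lean document; each statement's English description precedes it below -/
import Mathlib

section
/- Let M ≥ 1 and define the Maximum Weight Matching normalized weight map μ̄ : ℝ₊^M \ {0} → ℝ₊^M by μ̄_i(q) = q_i / ‖q‖₁. Then μ̄ satisfies Condition 1: for every ε ∈ (0,1) and every C > 0 there exists B > 0 such that |(q_i + Δq_i)/‖q + Δq‖₁ − q_i/‖q‖₁| ≤ ε for every index i, every q ∈ ℝ₊^M with ‖q‖ > B, and every Δq ∈ ℝ^M with ‖Δq‖ < C and q + Δq ∈ ℝ₊^M \ {0}. -/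
open scoped BigOperators

/-!
With `S = ‖q‖₁`, `T = ‖q + Δq‖₁`, `b = q i` and `a = q i + Δq i`, one has
`a / T - b / S = ((a / T) * (S - T) + (a - b)) / S`. Since `0 ≤ a ≤ T`, `|S - T| ≤ M * C`,
`|a - b| ≤ C` and `S ≥ ‖q‖`, the difference is at most `(M + 1) * C / ‖q‖`, so
`B = (M + 1) * C / ε` works. No lower bound on `T` beyond positivity is needed.
-/

lemma norm_le_sum_abs {M : ℕ} (x : EuclideanSpace ℝ (Fin M)) : ‖x‖ ≤ ∑ j, |x j| := by
  rw [EuclideanSpace.norm_eq]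
  apply Real.sqrt_le_iff.mpr
  refine ⟨Finset.sum_nonneg fun j _ => abs_nonneg _, ?_⟩
  simp only [Real.norm_eq_abs]
  exact Finset.sum_sq_le_sq_sum_of_nonneg fun j _ => abs_nonneg (x j)

/-- The MWM normalized weight map `μ̄ i q = q i / ‖q‖₁` on `ℝ₊^M \ {0}` satisfies
Condition 1. -/
theorem stmt_0 (M : ℕ) (hM : 1 ≤ M) :
    ∀ ε ∈ Set.Ioo (0 : ℝ) 1, ∀ C > (0 : ℝ), ∃ B > (0 : ℝ),
      ∀ i : Fin M, ∀ q : EuclideanSpace ℝ (Fin M),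
        (∀ j, 0 ≤ q j) → ‖q‖ > B →
        ∀ Δq : EuclideanSpace ℝ (Fin M), ‖Δq‖ < C →
          (∀ j, 0 ≤ q j + Δq j) → q + Δq ≠ 0 →
          |(q i + Δq i) / (∑ j, |q j + Δq j|) - q i / (∑ j, |q j|)| ≤ ε := by
  rintro ε ⟨hε, -⟩ C hC
  refine ⟨(M + 1) * C / ε, by positivity, ?_⟩
  intro i q _ hB Δq hΔ hqΔ hne
  have hcoord : ∀ j, |Δq j| ≤ C := fun j => (PiLp.norm_apply_le Δq j).trans hΔ.le
  have hS := hB.trans_le (norm_le_sum_abs q)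
  have hT : 0 < ∑ j, |q j + Δq j| :=
    (norm_pos_iff.mpr hne).trans_le (norm_le_sum_abs (q + Δq))
  have haT : |q i + Δq i| ≤ ∑ j, |q j + Δq j| :=
    Finset.single_le_sum (f := fun j => |q j + Δq j|) (fun j _ => abs_nonneg _)
      (Finset.mem_univ i)
  have hST : |(∑ j, |q j|) - (∑ j, |q j + Δq j|)| ≤ M * C := by
    rw [← Finset.sum_sub_distrib]
    calc |∑ j, (|q j| - |q j + Δq j|)| ≤ ∑ j, |(|q j| - |q j + Δq j|)| :=
          Finset.abs_sum_le_sum_abs _ _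
      _ ≤ ∑ _j : Fin M, C := Finset.sum_le_sum fun j _ => by
          refine (abs_abs_sub_abs_le _ _).trans ?_
          simpa using hcoord j
      _ = M * C := by simp
  generalize ∑ j, |q j + Δq j| = T at *
  generalize ∑ j, |q j| = S at *
  have hS0 : 0 < S := lt_trans (by positivity) hS
  have hSε : (M + 1) * C < S * ε := (div_lt_iff₀ hε).mp hS
  have hr : |(q i + Δq i) / T| ≤ 1 := by
    rw [abs_div, abs_of_pos hT]
    exact div_le_one_of_le₀ haT hT.le
  have key : (q i + Δq i) / T - q i / S = ((q i + Δq i) / T * (S - T) + Δq i) / S := by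
    field_simp
    ring
  rw [key, abs_div, abs_of_pos hS0, div_le_iff₀ hS0]
  calc |(q i + Δq i) / T * (S - T) + Δq i|
      ≤ |(q i + Δq i) / T| * |S - T| + |Δq i| := by
        rw [← abs_mul]
        exact abs_add_le _ _
    _ ≤ 1 * (M * C) + C := by
        gcongr
        exact hcoord i
    _ ≤ ε * S := by linarith
end

section
/- Let M ≥ 1 and fix constants γ_k > 0 and α_k > 0 for k = 1,…,M, β > 0, and η ∈ (0,1). For q ∈ ℝ₊^M define w_k(q) = γ_k · exp( α_k q_k / ( β + ((1/M) Σ_{j=1}^M α_j q_j)^η ) ) and the normalized exponential-rule weights μ̄_i(q) = w_i(q) / Σ_{k=1}^M w_k(q). Then μ̄ satisfies Condition 1: for every ε ∈ (0,1) and every C > 0 there exists B > 0 such that |μ̄_i(q+Δq) − μ̄_i(q)| ≤ ε for every index i, every q ∈ ℝ₊^M with ‖q‖ > B, and every Δq ∈ ℝ^M with ‖Δq‖ < C and q + Δq ∈ ℝ₊^M. -/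
open scoped BigOperators

/-!
Write `S` for the mean of the `α j * q j` and `D = β + S ^ η`, and let primes denote the values at
`q + Δq`. Each `α k * q k` and hence `S` move by at most some `A = O(C)`. Splitting
`a' / D' - a / D = (a' - a) / D' + a * (D - D') / (D * D')` and using `a ≤ M * S` together with
`S * |S' ^ η - S ^ η| ≤ S ^ η * |S' - S| ≤ D * A` (`mul_abs_rpow_sub_le`), every exponent moves by
at most `(M + 1) * A / D'` (`abs_exponent_sub_le`). This tends to `0` as `‖q‖ → ∞`, because `S` is
bounded below by a multiple of `‖q‖` on the orthant. If all exponents move by at most `δ`, the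
weights change by factors in `[exp (-δ), exp δ]`, so the normalized weights change by factors in
`[exp (-2δ), exp (2δ)]` (`normalized_sub_le`); `δ = log (1 + ε) / 2` gives the claim.
-/

/-- After dividing by `s * s ^ η` this is `|t ^ η - 1| ≤ |t - 1|` for `t = s' / s`. -/
lemma mul_abs_rpow_sub_le {s s' η : ℝ} (hs : 0 < s) (hs' : 0 ≤ s') (h0 : 0 < η) (h1 : η < 1) :
    s * |s' ^ η - s ^ η| ≤ s ^ η * |s' - s| := by
  obtain ⟨t, ht, rfl⟩ : ∃ t, 0 ≤ t ∧ s' = t * s := ⟨s' / s, by positivity, by field_simp⟩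
  have key : |t ^ η - 1| ≤ |t - 1| := by
    rcases le_total 1 t with h | h
    · have h2 : t ^ η ≤ t := by
        simpa using Real.rpow_le_rpow_of_exponent_le h h1.le
      have h3 : 1 ≤ t ^ η := Real.one_le_rpow h h0.le
      rw [abs_of_nonneg (by linarith), abs_of_nonneg (by linarith)]
      linarith
    · have h2 : t ≤ t ^ η := Real.self_le_rpow_of_le_one ht h h1.le
      have h3 : t ^ η ≤ 1 := Real.rpow_le_one ht h h0.le
      rw [abs_of_nonpos (by linarith), abs_of_nonpos (by linarith)]
      linarith
  have e1 : (t * s) ^ η - s ^ η = s ^ η * (t ^ η - 1) := by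
    rw [Real.mul_rpow ht hs.le]; ring
  have e2 : t * s - s = s * (t - 1) := by ring
  have hp : 0 < s ^ η := Real.rpow_pos_of_pos hs η
  rw [e1, e2, abs_mul, abs_mul, abs_of_pos hs, abs_of_pos hp]
  calc s * (s ^ η * |t ^ η - 1|) = (s * s ^ η) * |t ^ η - 1| := by ring
    _ ≤ (s * s ^ η) * |t - 1| := by gcongr
    _ = _ := by ring

lemma abs_exponent_sub_le {s s' η β a a' A m : ℝ} (hs : 0 < s) (hs' : 0 ≤ s')
    (h0 : 0 < η) (h1 : η < 1) (hβ : 0 < β) (ha : 0 ≤ a) (hm : 0 ≤ m)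
    (has : a ≤ m * s) (haa : |a' - a| ≤ A) (hss : |s' - s| ≤ A) :
    |a' / (β + s' ^ η) - a / (β + s ^ η)| ≤ (m + 1) * A / (β + s' ^ η) := by
  have hp : 0 < s ^ η := Real.rpow_pos_of_pos hs η
  have hp' : 0 ≤ s' ^ η := Real.rpow_nonneg hs' η
  have key := mul_abs_rpow_sub_le hs hs' h0 h1
  set P := s ^ η
  set P' := s' ^ η
  have e : a' / (β + P') - a / (β + P) =
      ((a' - a) * (β + P) + a * (P - P')) / ((β + P) * (β + P')) := by
    field_simp
    ring
  rw [e, abs_div, abs_of_pos (show 0 < (β + P) * (β + P') by positivity),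
    div_le_div_iff₀ (by positivity) (by positivity)]
  have hnum : |(a' - a) * (β + P) + a * (P - P')| ≤ (m + 1) * A * (β + P) := by
    calc _ ≤ |(a' - a) * (β + P)| + |a * (P - P')| := abs_add_le _ _
      _ = |a' - a| * (β + P) + a * |P' - P| := by
        rw [abs_mul, abs_mul, abs_of_nonneg ha, abs_of_pos (show 0 < β + P by positivity),
          abs_sub_comm P P']
      _ ≤ A * (β + P) + m * s * |P' - P| := by gcongr
      _ = A * (β + P) + m * (s * |P' - P|) := by ring
      _ ≤ A * (β + P) + m * (P * |s' - s|) := by gcongr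
      _ ≤ A * (β + P) + m * ((β + P) * A) := by
        gcongr
        linarith
      _ = _ := by ring
  calc _ ≤ ((m + 1) * A * (β + P)) * (β + P') := by gcongr
    _ = _ := by ring

/-- Families within a factor `r` of each other have normalizations within a factor `r * r`, and
normalized values are at most `1`. -/
lemma normalized_sub_le {ι : Type*} [Fintype ι] (u v : ι → ℝ) (hu : ∀ k, 0 < u k)
    (hv : ∀ k, 0 < v k) {r ε : ℝ} (hr : 0 < r) (hε : 0 ≤ ε) (hrε : r * r = 1 + ε)
    (huv : ∀ k, u k ≤ r * v k) (hvu : ∀ k, v k ≤ r * u k) (i : ι) :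
    u i / ∑ k, u k - v i / ∑ k, v k ≤ ε := by
  have hU : 0 < ∑ k, u k := Finset.sum_pos (fun k _ => hu k) ⟨i, Finset.mem_univ i⟩
  have hV : 0 < ∑ k, v k := Finset.sum_pos (fun k _ => hv k) ⟨i, Finset.mem_univ i⟩
  have hVU : ∑ k, v k ≤ r * ∑ k, u k := by
    rw [Finset.mul_sum]
    exact Finset.sum_le_sum fun k _ => hvu k
  have hle : v i / ∑ k, v k ≤ 1 :=
    (div_le_one hV).2 (Finset.single_le_sum (fun k _ => (hv k).le) (Finset.mem_univ i))
  have h : u i / ∑ k, u k ≤ (1 + ε) * (v i / ∑ k, v k) := by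
    rw [← hrε, ← mul_div_assoc, div_le_div_iff₀ hU hV]
    calc u i * ∑ k, v k ≤ (r * v i) * (r * ∑ k, u k) :=
          mul_le_mul (huv i) hVU hV.le (mul_pos hr (hv i)).le
      _ = _ := by ring
  nlinarith

/-- The normalized exponential-rule weight map satisfies Condition 1. -/
theorem stmt_2 (M : ℕ) (hM : 1 ≤ M) (γ α : Fin M → ℝ)
    (hγ : ∀ k, 0 < γ k) (hα : ∀ k, 0 < α k) (β : ℝ) (hβ : 0 < β)
    (η : ℝ) (hη : η ∈ Set.Ioo (0 : ℝ) 1)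
    (w : EuclideanSpace ℝ (Fin M) → Fin M → ℝ)
    (hw : ∀ q k, w q k =
      γ k * Real.exp (α k * q k / (β + ((1 / (M : ℝ)) * ∑ j, α j * q j) ^ η)))
    (μ : EuclideanSpace ℝ (Fin M) → Fin M → ℝ)
    (hμ : ∀ q i, μ q i = w q i / ∑ k, w q k) :
    ∀ ε ∈ Set.Ioo (0 : ℝ) 1, ∀ C > (0 : ℝ), ∃ B > (0 : ℝ),
      ∀ i : Fin M, ∀ q : EuclideanSpace ℝ (Fin M),
        (∀ j, 0 ≤ q j) → ‖q‖ > B →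
        ∀ Δq : EuclideanSpace ℝ (Fin M), ‖Δq‖ < C → (∀ j, 0 ≤ q j + Δq j) →
          |μ (q + Δq) i - μ q i| ≤ ε := by
  intro ε hε C hC
  obtain ⟨h0, h1⟩ := hη
  have hMpos : (0 : ℝ) < M := by exact_mod_cast hM
  have : Nonempty (Fin M) := ⟨⟨0, hM⟩⟩
  obtain ⟨k₀, hk₀⟩ := Finite.exists_min α
  obtain ⟨k₁, hk₁⟩ := Finite.exists_max α
  have hε0 : 0 < ε := hε.1
  set A := α k₁ * C with hAdef
  have hA : 0 < A := mul_pos (hα _) hC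
  set δ := Real.log (1 + ε) / 2 with hδdef
  have hδ : 0 < δ := half_pos (Real.log_pos (by linarith))
  -- `D' ≥ K` suffices for the exponents to move by at most `δ`.
  set K := ((M : ℝ) + 1) * A / δ with hKdef
  have hK : 0 < K := by positivity
  have hKη : 0 < K ^ (1 / η) := Real.rpow_pos_of_pos hK _
  have hαk₀ := hα k₀
  -- `‖q‖ > B` forces `S > K ^ (1 / η) + A`, hence `S' ≥ K ^ (1 / η)`.
  refine ⟨M / α k₀ * (K ^ (1 / η) + A), by positivity, ?_⟩
  intro i q hq hqB Δq hΔ hqΔ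
  set s := (1 / (M : ℝ)) * ∑ j, α j * q j with hs_def
  set s' := (1 / (M : ℝ)) * ∑ j, α j * (q + Δq) j with hs'_def
  have hnorm : ‖q‖ ≤ ∑ j, q j := by
    rw [EuclideanSpace.norm_eq]
    refine Real.sqrt_le_iff.2 ⟨Finset.sum_nonneg fun j _ => hq j, ?_⟩
    simp only [Real.norm_eq_abs, sq_abs]
    exact Finset.sum_sq_le_sq_sum_of_nonneg fun j _ => hq j
  have hs_big : K ^ (1 / η) + A < s := by
    have h2 : α k₀ * ∑ j, q j ≤ ∑ j, α j * q j := by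
      rw [Finset.mul_sum]
      exact Finset.sum_le_sum fun j _ => mul_le_mul_of_nonneg_right (hk₀ j) (hq j)
    have h3 : M / α k₀ * (K ^ (1 / η) + A) < ∑ j, q j := lt_of_lt_of_le hqB hnorm
    have h4 : M * (K ^ (1 / η) + A) < α k₀ * ∑ j, q j := by
      calc _ = α k₀ * (M / α k₀ * (K ^ (1 / η) + A)) := by field_simp
        _ < _ := by gcongr
    rw [hs_def, one_div_mul_eq_div, lt_div_iff₀ hMpos]
    linarith
  have hs : 0 < s := by linarith
  have hda : ∀ k, |α k * (q + Δq) k - α k * q k| ≤ A := by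
    intro k
    have : α k * (q + Δq) k - α k * q k = α k * Δq k := by
      simp only [PiLp.add_apply]; ring
    rw [this, abs_mul, abs_of_pos (hα k)]
    have h5 : |Δq k| ≤ C := by
      have := PiLp.norm_apply_le Δq k
      rw [Real.norm_eq_abs] at this
      linarith
    exact mul_le_mul (hk₁ k) h5 (abs_nonneg _) (hα _).le
  have hds : |s' - s| ≤ A := by
    rw [hs_def, hs'_def, ← mul_sub, ← Finset.sum_sub_distrib, abs_mul,
      abs_of_pos (by positivity), one_div, inv_mul_eq_div, div_le_iff₀ hMpos]
    calc _ ≤ ∑ k, |α k * (q + Δq) k - α k * q k| := Finset.abs_sum_le_sum_abs _ _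
      _ ≤ ∑ _k : Fin M, A := Finset.sum_le_sum fun k _ => hda k
      _ = A * M := by simp [mul_comm]
  have hs'_big : K ^ (1 / η) ≤ s' := by
    have := (abs_le.1 hds).1
    linarith
  have hs' : 0 ≤ s' := by linarith
  have hD' : K ≤ β + s' ^ η := by
    have h6 : (K ^ (1 / η)) ^ η ≤ s' ^ η := Real.rpow_le_rpow hKη.le hs'_big h0.le
    rw [← Real.rpow_mul hK.le, one_div_mul_cancel h0.ne', Real.rpow_one] at h6
    linarith
  have hexp : ∀ k, |α k * (q + Δq) k / (β + s' ^ η) - α k * q k / (β + s ^ η)| ≤ δ := by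
    intro k
    have has : α k * q k ≤ M * s := by
      have : M * s = ∑ j, α j * q j := by rw [hs_def]; field_simp
      rw [this]
      exact Finset.single_le_sum (f := fun j => α j * q j)
        (fun j _ => mul_nonneg (hα j).le (hq j)) (Finset.mem_univ k)
    refine (abs_exponent_sub_le hs hs' h0 h1 hβ (mul_nonneg (hα k).le (hq k)) hMpos.le
      has (hda k) hds).trans ?_
    rw [div_le_iff₀ (by linarith)]
    calc _ = δ * K := by rw [hKdef]; field_simp
      _ ≤ _ := by gcongr
  have hr : Real.exp δ * Real.exp δ = 1 + ε := by
    rw [← Real.exp_add, hδdef, add_halves, Real.exp_log (by linarith)]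
  have hpos : ∀ p k, 0 < w p k := fun p k => by
    rw [hw]; exact mul_pos (hγ k) (Real.exp_pos _)
  have hup : ∀ k, w (q + Δq) k ≤ Real.exp δ * w q k := by
    intro k
    rw [hw, hw, mul_left_comm, ← Real.exp_add]
    refine mul_le_mul_of_nonneg_left (Real.exp_le_exp.2 ?_) (hγ k).le
    have := (abs_le.1 (hexp k)).2
    linarith
  have hdown : ∀ k, w q k ≤ Real.exp δ * w (q + Δq) k := by
    intro k
    rw [hw, hw, mul_left_comm, ← Real.exp_add]
    refine mul_le_mul_of_nonneg_left (Real.exp_le_exp.2 ?_) (hγ k).le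
    have := (abs_le.1 (hexp k)).1
    linarith
  rw [hμ, hμ, abs_sub_le_iff]
  exact ⟨normalized_sub_le _ _ (hpos _) (hpos _) (Real.exp_pos δ) hε0.le hr hup hdown i,
    normalized_sub_le _ _ (hpos _) (hpos _) (Real.exp_pos δ) hε0.le hr hdown hup i⟩
end

section
/- Let M ≥ 1 and fix constants γ_k > 0 and α_k > 0 for k = 1,…,M, β > 0, and η ∈ (0,1). For q ∈ ℝ₊^M define w_k(q) = γ_k · exp( α_k q_k / ( β + ((1/M) Σ_{j=1}^M α_j q_j)^η ) ) and the normalized exponential-rule weights μ̄_i(q) = w_i(q) / Σ_{k=1}^M w_k(q). Then μ̄ satisfies Condition 2: for every ε ∈ (0,1) and every C > 0 there exists B > 0 such that μ̄_i(q) ≤ ε for every index i and every q ∈ ℝ₊^M with ‖q‖ > B and q_i < C. -/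
/-!
Write `S` for the mean of the `α j * q j`. Some index `k` has `α k * q k ≥ S`, so, with `q i < C`,
the normalized weight is at most
`w i / w k ≤ γ i / γ k * exp (α i * C / β - S / (β + S ^ η))`.
Since `η < 1`, the ratio `S / (β + S ^ η)` tends to infinity with `S` (`tendsto_self_div_add_rpow`),
and `S` is bounded below by a positive multiple of `‖q‖` on the nonnegative orthant
(`norm_le_sum_of_nonneg`), so the bound drops below `ε` once `‖q‖` is large. There are
finitely many pairs `(i, k)`, which makes the threshold uniform.
-/

open scoped BigOperators

lemma tendsto_self_div_add_rpow {β η : ℝ} (hβ : 0 < β) (hη : η ∈ Set.Ioo (0 : ℝ) 1) :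
    Filter.Tendsto (fun S : ℝ => S / (β + S ^ η)) Filter.atTop Filter.atTop := by
  have h1 : Filter.Tendsto (fun S : ℝ => S ^ (1 - η) / (β + 1)) Filter.atTop Filter.atTop :=
    (tendsto_rpow_atTop (by linarith [hη.2])).atTop_div_const (by linarith)
  refine Filter.tendsto_atTop_mono' _ ?_ h1
  filter_upwards [Filter.eventually_ge_atTop (1 : ℝ)] with S hS
  have hS0 : 0 < S := by linarith
  have h2 : 1 ≤ S ^ η := Real.one_le_rpow hS hη.1.le
  rw [Real.rpow_sub hS0, Real.rpow_one, div_div]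
  exact div_le_div_of_nonneg_left hS0.le (by linarith) (by nlinarith)

lemma norm_le_sum_of_nonneg {M : ℕ} (q : EuclideanSpace ℝ (Fin M)) (hq : ∀ j, 0 ≤ q j) :
    ‖q‖ ≤ ∑ j, q j := by
  rw [EuclideanSpace.norm_eq]
  refine Real.sqrt_le_iff.2 ⟨Finset.sum_nonneg fun j _ => hq j, ?_⟩
  simp only [Real.norm_eq_abs, sq_abs]
  exact Finset.sum_sq_le_sq_sum_of_nonneg fun j _ => hq j

/-- The normalized exponential-rule weight map satisfies Condition 2. -/
theorem stmt_4 (M : ℕ) (hM : 1 ≤ M) (γ α : Fin M → ℝ)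
    (hγ : ∀ k, 0 < γ k) (hα : ∀ k, 0 < α k) (β : ℝ) (hβ : 0 < β)
    (η : ℝ) (hη : η ∈ Set.Ioo (0 : ℝ) 1)
    (w : EuclideanSpace ℝ (Fin M) → Fin M → ℝ)
    (hw : ∀ q k, w q k =
      γ k * Real.exp (α k * q k / (β + ((1 / (M : ℝ)) * ∑ j, α j * q j) ^ η)))
    (μ : EuclideanSpace ℝ (Fin M) → Fin M → ℝ)
    (hμ : ∀ q i, μ q i = w q i / ∑ k, w q k) :
    ∀ ε ∈ Set.Ioo (0 : ℝ) 1, ∀ C > (0 : ℝ), ∃ B > (0 : ℝ),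
      ∀ i : Fin M, ∀ q : EuclideanSpace ℝ (Fin M),
        (∀ j, 0 ≤ q j) → ‖q‖ > B → q i < C →
          μ q i ≤ ε := by
  intro ε hε C hC
  have hM0 : (0 : ℝ) < M := by exact_mod_cast hM
  have : Nonempty (Fin M) := ⟨⟨0, hM⟩⟩
  have hev : ∀ᶠ S : ℝ in Filter.atTop, ∀ i k : Fin M,
      γ i / γ k * Real.exp (α i * C / β - S / (β + S ^ η)) ≤ ε := by
    refine Filter.eventually_all.2 fun i => Filter.eventually_all.2 fun k => ?_
    have h1 : Filter.Tendsto (fun S : ℝ => α i * C / β - S / (β + S ^ η))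
        Filter.atTop Filter.atBot := by
      simpa only [sub_eq_add_neg, Function.comp_def] using Filter.tendsto_atBot_add_const_left _ (α i * C / β)
        (Filter.tendsto_neg_atTop_atBot.comp (tendsto_self_div_add_rpow hβ hη))
    have h2 := (Real.tendsto_exp_atBot.comp h1).const_mul (γ i / γ k)
    rw [mul_zero] at h2
    exact h2.eventually_le_const hε.1
  obtain ⟨T, hT⟩ := Filter.eventually_atTop.1 hev
  have hA : 0 < ∑ j, (α j)⁻¹ :=
    Finset.sum_pos (fun j _ => inv_pos.2 (hα j)) Finset.univ_nonempty
  refine ⟨(∑ j, (α j)⁻¹) * (M * max T 1), by positivity, ?_⟩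
  intro i q hq hqB hqi
  have hterm : ∀ j, 0 ≤ α j * q j := fun j => mul_nonneg (hα j).le (hq j)
  rw [hμ]
  have hwpos : ∀ k, 0 < w q k := fun k => by
    rw [hw]
    exact mul_pos (hγ k) (Real.exp_pos _)
  simp only [hw] at hwpos ⊢
  set S : ℝ := (1 / (M : ℝ)) * ∑ j, α j * q j with hS
  have hMS : ∑ j, α j * q j = M * S := by
    rw [hS]
    field_simp
  have hS0 : 0 ≤ S := mul_nonneg (by positivity) (Finset.sum_nonneg fun j _ => hterm j)
  have hTS : T ≤ S := by
    have h1 : ∑ j, q j ≤ (∑ j, (α j)⁻¹) * (M * S) := by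
      rw [Finset.sum_mul]
      refine Finset.sum_le_sum fun j _ => ?_
      rw [← hMS, inv_mul_eq_div, le_div_iff₀ (hα j), mul_comm]
      exact Finset.single_le_sum (fun j _ => hterm j) (Finset.mem_univ j)
    have h2 := hqB.lt.trans_le ((norm_le_sum_of_nonneg q hq).trans h1)
    have h3 := lt_of_mul_lt_mul_left (lt_of_mul_lt_mul_left h2 hA.le) hM0.le
    exact (le_max_left T 1).trans h3.le
  -- Some term is at least the mean `S`.
  obtain ⟨k, -, hk⟩ : ∃ k ∈ Finset.univ, S ≤ α k * q k :=
    Finset.exists_le_of_sum_le Finset.univ_nonempty (by simp [hMS])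
  have hD : 0 < β + S ^ η := add_pos_of_pos_of_nonneg hβ (Real.rpow_nonneg hS0 _)
  have hi : α i * q i / (β + S ^ η) ≤ α i * C / β :=
    div_le_div₀ (mul_pos (hα i) hC).le (mul_le_mul_of_nonneg_left hqi.le (hα i).le) hβ
      (le_add_of_nonneg_right (Real.rpow_nonneg hS0 _))
  have hk' : S / (β + S ^ η) ≤ α k * q k / (β + S ^ η) := div_le_div_of_nonneg_right hk hD.le
  calc _ ≤ γ i * Real.exp (α i * q i / (β + S ^ η)) /
        (γ k * Real.exp (α k * q k / (β + S ^ η))) :=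
        div_le_div_of_nonneg_left (hwpos i).le (hwpos k)
          (Finset.single_le_sum (f := fun k => γ k * Real.exp (α k * q k / (β + S ^ η)))
            (fun j _ => (hwpos j).le) (Finset.mem_univ k))
    _ = γ i / γ k * Real.exp (α i * q i / (β + S ^ η) - α k * q k / (β + S ^ η)) := by
        rw [Real.exp_sub, mul_div_mul_comm]
    _ ≤ γ i / γ k * Real.exp (α i * C / β - S / (β + S ^ η)) :=
        mul_le_mul_of_nonneg_left (Real.exp_le_exp.2 (sub_le_sub hi hk'))
          (div_pos (hγ i) (hγ k)).le
    _ ≤ ε := hT S hTS i k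
end

section
/- Let M ≥ 1 and for each k = 1,…,M let μ_k : ℝ₊ → ℝ₊ be a nondecreasing continuous function with μ_k(x) → +∞ as x → +∞. Fix an index i. Then for every ε ∈ (0,1) and every C > 0 there exists B > 0 such that for every q ∈ ℝ₊^M with ‖q‖ > B and q_i ≤ C, one has μ_i(q_i) ≤ ε · Σ_{k=1}^M μ_k(q_k). In other words, the normalized weight vector μ̄_i(q) = μ_i(q_i)/Σ_k μ_k(q_k) of an Eryilmaz-type policy satisfies Condition 2 at coordinate i. -/
/-!
Past some threshold `R` every weight function is at least `μ i C / ε`. If `‖q‖ > M * R`, some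
coordinate `q j` exceeds `R`, so the single summand `μ j (q j)` is already at least `μ i C / ε`,
while `μ i (q i) ≤ μ i C` by monotonicity. The case `j = i` needs no separate treatment.
-/

open scoped BigOperators

/-- For Eryilmaz-type per-user weight functions (nondecreasing, continuous, tending to
infinity), the normalized weight `μ i (q i) / ∑ k, μ k (q k)` satisfies Condition 2 at
coordinate `i`. -/
theorem stmt_5 (M : ℕ) (hM : 1 ≤ M) (μ : Fin M → ℝ → ℝ)
    (hnonneg : ∀ k, ∀ x : ℝ, 0 ≤ x → 0 ≤ μ k x)
    (hmono : ∀ k, MonotoneOn (μ k) (Set.Ici (0 : ℝ)))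
    (hcont : ∀ k, ContinuousOn (μ k) (Set.Ici (0 : ℝ)))
    (htop : ∀ k, Filter.Tendsto (μ k) Filter.atTop Filter.atTop)
    (i : Fin M) :
    ∀ ε ∈ Set.Ioo (0 : ℝ) 1, ∀ C > (0 : ℝ), ∃ B > (0 : ℝ),
      ∀ q : EuclideanSpace ℝ (Fin M), (∀ j, 0 ≤ q j) → ‖q‖ > B → q i ≤ C →
        μ i (q i) ≤ ε * ∑ k, μ k (q k) := by
  rintro ε ⟨hε, -⟩ C hC
  have hev : ∀ᶠ x in Filter.atTop, ∀ k, μ i C / ε ≤ μ k x :=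
    Filter.eventually_all.2 fun k => (htop k).eventually_ge_atTop _
  obtain ⟨R₀, hR₀⟩ := Filter.eventually_atTop.1 hev
  set R := max R₀ 1
  have hR : 0 < R := lt_of_lt_of_le one_pos (le_max_right _ _)
  have hM' : (1 : ℝ) ≤ M := by exact_mod_cast hM
  refine ⟨M * R, by positivity, fun q hq hnorm hqi => ?_⟩
  -- A vector of norm exceeding `M * R` has a coordinate exceeding `R`.
  obtain ⟨j, hj⟩ : ∃ j, R < q j := by
    by_contra! hle
    refine absurd hnorm (not_lt.2 ?_)
    rw [EuclideanSpace.norm_eq]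
    refine Real.sqrt_le_iff.2 ⟨by positivity, ?_⟩
    calc ∑ k, ‖q k‖ ^ 2 ≤ ∑ _k : Fin M, R ^ 2 := by
          refine Finset.sum_le_sum fun k _ => ?_
          rw [Real.norm_of_nonneg (hq k)]
          exact pow_le_pow_left₀ (hq k) (hle k) 2
      _ = M * R ^ 2 := by simp
      _ ≤ (M * R) ^ 2 := by
          rw [mul_pow]
          exact mul_le_mul_of_nonneg_right (by nlinarith) (by positivity)
  calc μ i (q i) ≤ μ i C := hmono i (hq i) hC.le hqi
    _ = ε * (μ i C / ε) := by field_simp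
    _ ≤ ε * μ j (q j) :=
        mul_le_mul_of_nonneg_left (hR₀ _ ((le_max_left _ _).trans hj.le) j) hε.le
    _ ≤ ε * ∑ k, μ k (q k) :=
        mul_le_mul_of_nonneg_left
          (Finset.single_le_sum (f := fun k => μ k (q k))
            (fun k _ => hnonneg k _ (hq k)) (Finset.mem_univ j)) hε.le
end

section
/- Let M ≥ 1 and for each k = 1,…,M let μ_k : ℝ₊ → (0,∞) be a nondecreasing continuous function with μ_k(x) → +∞ as x → +∞, satisfying the Eryilmaz condition: for every ε ∈ (0,1) and all C₁ > 0, C₂ > 0 there exists B < +∞ such that for all x > B and all k, (1−ε)μ_k(x) ≤ μ_k(x−C₁) ≤ μ_k(x+C₂) ≤ (1+ε)μ_k(x). Then the normalized weight map μ̄_i(q) = μ_i(q_i)/Σ_{k=1}^M μ_k(q_k) on ℝ₊^M satisfies Condition 1: for every ε₁ ∈ (0,1) and every C > 0 there exists B > 0 such that |μ̄_i(q+Δq) − μ̄_i(q)| ≤ ε₁ for every index i, every q ∈ ℝ₊^M with ‖q‖ > B, and every Δq ∈ ℝ^M with ‖Δq‖ < C and q + Δq ∈ ℝ₊^M. -/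
open scoped BigOperators

/-!
Write `S = ∑ k, μ k (q k)` and `S' = ∑ k, μ k (q k + Δq k)`, and let `D` be the sum of the absolute
changes of the individual weights. Then the `i`-th normalized weight changes by at most `2 * D / S`
(`abs_div_sub_div_le`). The Eryilmaz condition bounds each change by `δ * μ k (q k)` when `q k` is
large, and monotonicity bounds it by a constant when `q k` is small (`abs_shift_sub_le`), so
`D ≤ δ * S + K` with `K` independent of `q`. When `‖q‖` is large some coordinate is large
(`exists_lt_of_norm_gt`), hence so is `S`, and `2 * (δ * S + K) / S` is small.
-/

lemma abs_div_sub_div_le {a a' S S' D : ℝ} (ha' : 0 ≤ a') (haS' : a' ≤ S') (hS : 0 < S)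
    (hS' : 0 < S') (h1 : |a' - a| ≤ D) (h2 : |S' - S| ≤ D) :
    |a' / S' - a / S| ≤ 2 * D / S := by
  have key : a' / S' - a / S = ((a' - a) + a' / S' * (S - S')) / S := by
    field_simp
    ring
  rw [key, abs_div, abs_of_pos hS]
  gcongr
  have h3 : 0 ≤ a' / S' := by positivity
  have h4 : a' / S' ≤ 1 := (div_le_one hS').2 haS'
  have h5 : |a' / S' * (S - S')| ≤ D := by
    rw [abs_mul, abs_of_nonneg h3, abs_sub_comm]
    exact (mul_le_of_le_one_left (abs_nonneg _) h4).trans h2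
  linarith [abs_add_le (a' - a) (a' / S' * (S - S'))]

/-- A bounded shift changes a weight by a small multiple of itself (beyond the threshold `B`) plus
a constant (which covers the arguments below `B`). -/
lemma abs_shift_sub_le {f : ℝ → ℝ} (hpos : ∀ x, 0 ≤ x → 0 < f x)
    (hmono : MonotoneOn f (Set.Ici 0)) {δ C B : ℝ} (hδ : 0 < δ) (hC : 0 < C) (hCB : C ≤ B)
    (hB : ∀ x > B, (1 - δ) * f x ≤ f (x - C) ∧ f (x + C) ≤ (1 + δ) * f x)
    {x d : ℝ} (hx : 0 ≤ x) (hd : |d| ≤ C) (hxd : 0 ≤ x + d) :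
    |f (x + d) - f x| ≤ δ * f x + f (B + C) := by
  obtain ⟨hd1, hd2⟩ := abs_le.1 hd
  have hK := hpos (B + C) (by linarith)
  have hfx := hpos x hx
  have hfxd := hpos _ hxd
  have hm := mul_pos hδ hfx
  rw [abs_le]
  rcases le_or_gt x B with h | h
  · have e1 : f x ≤ f (B + C) := hmono hx (Set.mem_Ici.2 (by linarith)) (by linarith)
    have e2 : f (x + d) ≤ f (B + C) := hmono hxd (Set.mem_Ici.2 (by linarith)) (by linarith)
    constructor <;> linarith
  · obtain ⟨b1, b2⟩ := hB x h
    have e1 : f (x - C) ≤ f (x + d) := hmono (Set.mem_Ici.2 (by linarith)) hxd (by linarith)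
    have e2 : f (x + d) ≤ f (x + C) := hmono hxd (Set.mem_Ici.2 (by linarith)) (by linarith)
    constructor <;> linarith

lemma exists_lt_of_norm_gt {M : ℕ} {R : ℝ} (hR : 0 ≤ R) (q : EuclideanSpace ℝ (Fin M))
    (hq : ∀ j, 0 ≤ q j) (h : M * R < ‖q‖) : ∃ j, R < q j := by
  by_contra! hc
  refine absurd h (not_lt.2 ?_)
  have h1 : ‖q‖ ^ 2 ≤ M * R ^ 2 := by
    rw [EuclideanSpace.norm_sq_eq]
    calc ∑ j, ‖q j‖ ^ 2 ≤ ∑ _j : Fin M, R ^ 2 := by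
          refine Finset.sum_le_sum fun j _ => ?_
          rw [Real.norm_eq_abs, sq_abs]
          exact pow_le_pow_left₀ (hq j) (hc j) 2
      _ = M * R ^ 2 := by simp
  have h2 : (M : ℝ) ≤ (M : ℝ) ^ 2 := by exact_mod_cast Nat.le_self_pow two_ne_zero M
  refine abs_le_of_sq_le_sq' ?_ (by positivity) |>.2
  nlinarith [mul_le_mul_of_nonneg_right h2 (sq_nonneg R)]

/-- For Eryilmaz-type per-user weight functions satisfying the Eryilmaz condition, the
normalized weight map `μ̄ i q = μ i (q i) / ∑ k, μ k (q k)` satisfies Condition 1. -/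
theorem stmt_6 (M : ℕ) (hM : 1 ≤ M) (μ : Fin M → ℝ → ℝ)
    (hpos : ∀ k, ∀ x : ℝ, 0 ≤ x → 0 < μ k x)
    (hmono : ∀ k, MonotoneOn (μ k) (Set.Ici (0 : ℝ)))
    (hcont : ∀ k, ContinuousOn (μ k) (Set.Ici (0 : ℝ)))
    (htop : ∀ k, Filter.Tendsto (μ k) Filter.atTop Filter.atTop)
    (hery : ∀ ε ∈ Set.Ioo (0 : ℝ) 1, ∀ C₁ > (0 : ℝ), ∀ C₂ > (0 : ℝ), ∃ B : ℝ,
      ∀ x > B, ∀ k, (1 - ε) * μ k x ≤ μ k (x - C₁) ∧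
        μ k (x - C₁) ≤ μ k (x + C₂) ∧ μ k (x + C₂) ≤ (1 + ε) * μ k x) :
    ∀ ε₁ ∈ Set.Ioo (0 : ℝ) 1, ∀ C > (0 : ℝ), ∃ B > (0 : ℝ),
      ∀ i : Fin M, ∀ q : EuclideanSpace ℝ (Fin M), (∀ j, 0 ≤ q j) → ‖q‖ > B →
        ∀ Δq : EuclideanSpace ℝ (Fin M), ‖Δq‖ < C → (∀ j, 0 ≤ q j + Δq j) →
          |μ i (q i + Δq i) / (∑ k, μ k (q k + Δq k)) -
            μ i (q i) / (∑ k, μ k (q k))| ≤ ε₁ := by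
  intro ε hε C hC
  obtain ⟨hε0, hε1⟩ := hε
  obtain ⟨B₀, hB₀⟩ := hery (ε / 4) ⟨by linarith, by linarith⟩ C hC C hC
  set B₁ := max B₀ C
  set K := ∑ k, μ k (B₁ + C)
  have hB₁ : 0 ≤ B₁ := hC.le.trans (le_max_right _ _)
  -- `S ≥ 4 * K / ε` makes the constant part `2 * K / S` of the error at most `ε / 2`.
  obtain ⟨R, hR⟩ := Filter.eventually_atTop.1
    (Filter.eventually_all.2 fun k => (htop k).eventually_ge_atTop (4 * K / ε))
  refine ⟨M * max R 0 + 1, by positivity, fun i q hq hqB Δq hΔ hqΔ => ?_⟩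
  have hd : ∀ j, |Δq j| ≤ C := fun j => (PiLp.norm_apply_le Δq j).trans hΔ.le
  obtain ⟨j, hj⟩ := exists_lt_of_norm_gt (le_max_right R 0) q hq (by linarith)
  have hle : ∀ k, μ k (q k) ≤ ∑ k, μ k (q k) := fun k =>
    Finset.single_le_sum (f := fun k => μ k (q k)) (fun k _ => (hpos k _ (hq k)).le)
      (Finset.mem_univ k)
  have hle' : μ i (q i + Δq i) ≤ ∑ k, μ k (q k + Δq k) :=
    Finset.single_le_sum (f := fun k => μ k (q k + Δq k)) (fun k _ => (hpos k _ (hqΔ k)).le)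
      (Finset.mem_univ i)
  have hSK : 4 * K / ε ≤ ∑ k, μ k (q k) :=
    (hR (q j) ((le_max_left _ _).trans hj.le) j).trans (hle j)
  have hS : 0 < ∑ k, μ k (q k) := (hpos i _ (hq i)).trans_le (hle i)
  have hS' : 0 < ∑ k, μ k (q k + Δq k) := (hpos i _ (hqΔ i)).trans_le hle'
  have hD : ∑ k, |μ k (q k + Δq k) - μ k (q k)| ≤ ε / 4 * (∑ k, μ k (q k)) + K := by
    rw [Finset.mul_sum, ← Finset.sum_add_distrib]
    refine Finset.sum_le_sum fun k _ => ?_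
    refine abs_shift_sub_le (hpos k) (hmono k) (by linarith) hC (le_max_right _ _)
      (fun x hx => ?_) (hq k) (hd k) (hqΔ k)
    have := hB₀ x ((le_max_left _ _).trans_lt hx) k
    exact ⟨this.1, this.2.2⟩
  refine (abs_div_sub_div_le (D := ∑ k, |μ k (q k + Δq k) - μ k (q k)|)
    (hpos i _ (hqΔ i)).le hle' hS hS' ?_ ?_).trans ?_
  · exact Finset.single_le_sum (f := fun k => |μ k (q k + Δq k) - μ k (q k)|)
      (fun k _ => abs_nonneg _) (Finset.mem_univ i)
  · rw [← Finset.sum_sub_distrib]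
    exact Finset.abs_sum_le_sum_abs _ _
  · rw [div_le_iff₀ hS]
    rw [div_le_iff₀ hε0] at hSK
    linarith
end

section
/- Let M ≥ 1, let S = { x ∈ ℝ₊^M : ‖x‖₂ = 1 }, and let g : S → ℝ^M be continuous with g_i(x) = 0 for every index i and every x ∈ S with x_i = 0. Define μ̄(q) = g( q/‖q‖₂ ) for q ∈ ℝ₊^M with q ≠ 0. Then μ̄ satisfies Condition 2: for every ε ∈ (0,1) and every C > 0 there exists B > 0 such that |μ̄_i(q)| ≤ ε for every index i and every q ∈ ℝ₊^M \ {0} with ‖q‖₂ > B and q_i < C. -/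
/-!
For each coordinate `i`, the points of `S` where `|g_i| ≥ ε` form a compact set on which `x_i > 0`,
so `x_i ≥ δ_i > 0` there. Hence `|g_i(q / ‖q‖)| > ε` forces `δ_i ‖q‖ ≤ q_i < C`, which is impossible
once `‖q‖` exceeds every `C / δ_i`.
-/

open scoped BigOperators

/-- A scale-invariant weight map `μ̄ q = g (q / ‖q‖₂)` given by a continuous function `g`
on the intersection `S` of the unit sphere with the nonnegative orthant, whose `i`-th
component vanishes when the `i`-th coordinate vanishes, satisfies Condition 2. -/
theorem stmt_8 (M : ℕ) (hM : 1 ≤ M)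
    (g : EuclideanSpace ℝ (Fin M) → EuclideanSpace ℝ (Fin M))
    (hg : ContinuousOn g {x : EuclideanSpace ℝ (Fin M) | (∀ i, 0 ≤ x i) ∧ ‖x‖ = 1})
    (hg0 : ∀ x : EuclideanSpace ℝ (Fin M), ((∀ i, 0 ≤ x i) ∧ ‖x‖ = 1) →
      ∀ i, x i = 0 → g x i = 0) :
    ∀ ε ∈ Set.Ioo (0 : ℝ) 1, ∀ C > (0 : ℝ), ∃ B > (0 : ℝ),
      ∀ i : Fin M, ∀ q : EuclideanSpace ℝ (Fin M),
        (∀ j, 0 ≤ q j) → q ≠ 0 → ‖q‖ > B → q i < C →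
          |g (‖q‖⁻¹ • q) i| ≤ ε := by
  rintro ε ⟨hε, -⟩ C hC
  set S : Set (EuclideanSpace ℝ (Fin M)) := {x | (∀ i, 0 ≤ x i) ∧ ‖x‖ = 1} with hS
  have hScl : IsClosed S := by
    have h1 : IsClosed {x : EuclideanSpace ℝ (Fin M) | ∀ i, 0 ≤ x i} := by
      simp only [Set.setOf_forall]
      exact isClosed_iInter fun i => isClosed_le continuous_const (by fun_prop)
    exact h1.inter (isClosed_eq continuous_norm continuous_const)
  have hScpt : IsCompact S :=
    (isCompact_sphere (0 : EuclideanSpace ℝ (Fin M)) 1).of_isClosed_subset hScl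
      fun x hx => by simpa using hx.2
  have key : ∀ i : Fin M, ∃ δ : ℝ, 0 < δ ∧ ∀ x ∈ S, ε ≤ |g x i| → δ ≤ x i := by
    intro i
    have hgi : ContinuousOn (fun x => |g x i|) S := by
      have hi : Continuous fun y : EuclideanSpace ℝ (Fin M) => |y i| := by fun_prop
      exact hi.comp_continuousOn hg
    have hK : IsCompact (S ∩ (fun x => |g x i|) ⁻¹' Set.Ici ε) :=
      hScpt.of_isClosed_subset (hgi.preimage_isClosed_of_isClosed hScl isClosed_Ici)
        Set.inter_subset_left
    have hcoord : Continuous fun x : EuclideanSpace ℝ (Fin M) => x i := by fun_prop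
    obtain ⟨δ, hδ, h⟩ := hK.exists_forall_le' (a := (0 : ℝ)) hcoord.continuousOn (by
      rintro x ⟨hxS, hx⟩
      refine lt_of_le_of_ne (hxS.1 i) fun h0 => ?_
      have hx' : ε ≤ |g x i| := hx
      rw [hg0 x hxS i h0.symm, abs_zero] at hx'
      linarith)
    exact ⟨δ, hδ, fun x hx hxε => h x ⟨hx, hxε⟩⟩
  choose δ hδ h using key
  have hnn : ∀ i ∈ Finset.univ, 0 ≤ C / δ i := fun i _ => (div_pos hC (hδ i)).le
  -- The sum dominates every `C / δ i`; adding `1` keeps it visibly positive.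
  refine ⟨1 + ∑ i, C / δ i, by linarith [Finset.sum_nonneg hnn], ?_⟩
  intro i q hq hq0 hB hqC
  by_contra! hlt
  have hpos : 0 < ‖q‖ := norm_pos_iff.mpr hq0
  have hmem : ‖q‖⁻¹ • q ∈ S := by
    refine ⟨fun j => ?_, ?_⟩
    · have := hq j
      simp only [PiLp.smul_apply, smul_eq_mul]
      positivity
    · rw [norm_smul, norm_inv, norm_norm, inv_mul_cancel₀ hpos.ne']
  have h1 := h i _ hmem hlt.le
  rw [PiLp.smul_apply, smul_eq_mul, inv_mul_eq_div, le_div_iff₀ hpos] at h1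
  have h2 : C / δ i < ‖q‖ := by
    linarith [Finset.single_le_sum hnn (Finset.mem_univ i)]
  rw [div_lt_iff₀ (hδ i)] at h2
  linarith
end

section
/- Let M ≥ 1, let ā_1,…,ā_M > 0 be constants, and let η_j : ℝ₊^M → ℝ₊ for j = 1,…,M satisfy: (i) for every C > 0 there exists D > 0 such that |η_j(q+Δq) − η_j(q)| ≤ D for all j, all q ∈ ℝ₊^M, and all Δq ∈ ℝ^M with ‖Δq‖ ≤ C and q + Δq ∈ ℝ₊^M; and (ii) for every K > 0 there exists B > 0 such that Σ_{j=1}^M η_j(q)/ā_j ≥ K whenever ‖q‖ > B. Then the normalized ISPS weight map μ̄_i(q) = (η_i(q)/ā_i) / Σ_{j=1}^M (η_j(q)/ā_j) satisfies Condition 1: for every ε ∈ (0,1) and every C > 0 there exists B > 0 such that |μ̄_i(q+Δq) − μ̄_i(q)| ≤ ε for every index i, every q ∈ ℝ₊^M with ‖q‖ > B, and every Δq ∈ ℝ^M with ‖Δq‖ < C and q + Δq ∈ ℝ₊^M. -/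
/-!
Write `x j = η j q / a j` and `y j = η j (q + Δq) / a j`, with sums `S` and `T`. If `‖Δq‖ < C` then
each `|y j - x j|`, and also `|T - S|`, is at most the constant `L = ∑ j, D / a j`. From
`y i / T - x i / S = ((y i - x i) + (y i / T) * (S - T)) / S` and `0 ≤ y i / T ≤ 1`, the weights
differ by at most `2 * L / S` (lemma `abs_ratio_sub_le`), which is at most `ε` once `‖q‖` is so
large that `S ≥ 2 * L / ε`.
-/

open scoped BigOperators

/-- Stability of a ratio `x / S` under perturbations of size `L` of both numerator and denominator,
when the perturbed ratio lies in `[0, 1]` and `S` is large compared with `L`. -/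
lemma abs_ratio_sub_le {x y S T L ε : ℝ} (hxy : |y - x| ≤ L) (hST : |T - S| ≤ L)
    (hy : 0 ≤ y) (hyT : y ≤ T) (hT : 0 < T) (hS : 0 < S) (hL : 2 * L ≤ ε * S) :
    |y / T - x / S| ≤ ε := by
  have key : y / T - x / S = ((y - x) + y / T * (S - T)) / S := by
    field_simp
    ring
  have h0 : 0 ≤ y / T := div_nonneg hy hT.le
  have h1 : y / T ≤ 1 := (div_le_one hT).2 hyT
  have h2 : |y / T * (S - T)| ≤ L := by
    rw [abs_mul, abs_of_nonneg h0, abs_sub_comm]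
    exact (mul_le_of_le_one_left (abs_nonneg _) h1).trans hST
  rw [key, abs_div, abs_of_pos hS, div_le_iff₀ hS]
  linarith [abs_add_le (y - x) (y / T * (S - T))]

/-- The normalized ISPS weight map `μ̄ i q = (η i q / a i) / ∑ j, η j q / a j` satisfies
Condition 1, assuming bounded queue changes change each `η j` boundedly and the total
weighted service time diverges with the total queue length. -/
theorem stmt_9 (M : ℕ) (hM : 1 ≤ M) (a : Fin M → ℝ) (ha : ∀ j, 0 < a j)
    (η : Fin M → EuclideanSpace ℝ (Fin M) → ℝ)
    (hηnonneg : ∀ j, ∀ q : EuclideanSpace ℝ (Fin M), (∀ k, 0 ≤ q k) → 0 ≤ η j q)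
    (hbd : ∀ C > (0 : ℝ), ∃ D > (0 : ℝ), ∀ j, ∀ q : EuclideanSpace ℝ (Fin M),
      (∀ k, 0 ≤ q k) → ∀ Δq : EuclideanSpace ℝ (Fin M), ‖Δq‖ ≤ C →
        (∀ k, 0 ≤ q k + Δq k) → |η j (q + Δq) - η j q| ≤ D)
    (hdiv : ∀ K > (0 : ℝ), ∃ B > (0 : ℝ), ∀ q : EuclideanSpace ℝ (Fin M),
      (∀ k, 0 ≤ q k) → ‖q‖ > B → (∑ j, η j q / a j) ≥ K) :
    ∀ ε ∈ Set.Ioo (0 : ℝ) 1, ∀ C > (0 : ℝ), ∃ B > (0 : ℝ),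
      ∀ i : Fin M, ∀ q : EuclideanSpace ℝ (Fin M), (∀ k, 0 ≤ q k) → ‖q‖ > B →
        ∀ Δq : EuclideanSpace ℝ (Fin M), ‖Δq‖ < C → (∀ k, 0 ≤ q k + Δq k) →
          |(η i (q + Δq) / a i) / (∑ j, η j (q + Δq) / a j) -
            (η i q / a i) / (∑ j, η j q / a j)| ≤ ε := by
  rintro ε ⟨hε0, hε1⟩ C hC
  obtain ⟨D, hD, hD'⟩ := hbd C hC
  have : Nonempty (Fin M) := ⟨⟨0, hM⟩⟩
  have hpos : ∀ j, 0 < D / a j := fun j => div_pos hD (ha j)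
  obtain ⟨L, hLdef⟩ : ∃ L, L = ∑ j, D / a j := ⟨_, rfl⟩
  have hL : 0 < L := hLdef ▸ Finset.sum_pos (fun j _ => hpos j) Finset.univ_nonempty
  obtain ⟨B, hB, hB'⟩ := hdiv (2 * L / ε) (by positivity)
  refine ⟨B, hB, fun i q hq hqB Δq hΔ hqΔ => ?_⟩
  have hK := hB' q hq hqB
  have hdiff : ∀ j, |η j (q + Δq) / a j - η j q / a j| ≤ D / a j := fun j => by
    rw [← sub_div, abs_div, abs_of_pos (ha j)]
    exact div_le_div_of_nonneg_right (hD' j q hq Δq hΔ.le hqΔ) (ha j).le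
  have hy : ∀ j, 0 ≤ η j (q + Δq) / a j := fun j =>
    div_nonneg (hηnonneg j _ fun k => by simpa using hqΔ k) (ha j).le
  have hsum : |∑ j, η j (q + Δq) / a j - ∑ j, η j q / a j| ≤ L := by
    rw [← Finset.sum_sub_distrib, hLdef]
    exact (Finset.abs_sum_le_sum_abs _ _).trans (Finset.sum_le_sum fun j _ => hdiff j)
  have hi : D / a i ≤ L := hLdef ▸
    Finset.single_le_sum (f := fun j => D / a j) (fun j _ => (hpos j).le) (Finset.mem_univ i)
  have hKε : 2 * L ≤ ε * ∑ j, η j q / a j := by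
    rw [mul_comm ε]
    exact (div_le_iff₀ hε0).1 hK
  -- Since `ε < 1`, the total exceeds `L`, so the perturbed total stays positive.
  have hKL : 2 * L ≤ ∑ j, η j q / a j :=
    ((le_div_iff₀ hε0).2 (by nlinarith)).trans hK
  refine abs_ratio_sub_le ((hdiff i).trans hi) hsum (hy i)
    (Finset.single_le_sum (f := fun j => η j (q + Δq) / a j) (fun j _ => hy j)
      (Finset.mem_univ i)) ?_ ?_ hKε
  · linarith [(abs_le.1 hsum).1]
  · linarith
end

section
/- Let M ≥ 2, fix an index i, and let q, Δq ∈ ℝ^M and constants C₁, C₂ > 0 and 0 < C₃ ≤ C₄ satisfy: C₁ ≤ exp(q_i − q_j) ≤ C₂ for every j ≠ i; C₃ ≤ Δq_i ≤ C₄; and Δq_j ≤ 0 for every j ≠ i. Define the softmax weights σ_i(x) = e^{x_i} / Σ_{j=1}^M e^{x_j}. Then σ_i(q + Δq) − σ_i(q) ≥ (e^{C₃} − 1) / ( (e^{C₄} + (M−1)/C₁) · (C₂/(M−1) + 1) ), a strictly positive bound independent of q. -/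
/-!
Write `a = e^{q_i}`, `E = e^{Δq_i}` and `S = ∑_{j ≠ i} e^{q_j}`. Non-increase of the other
coordinates only shrinks the denominator of the new weight, so the jump is at least
`aE / (aE + S) - a / (a + S) = (E - 1) / ((E + S / a) * (a / S + 1))`.
Summing the ratio bounds over the `M - 1` indices `j ≠ i` gives
`S / a ≤ (M - 1) / C₁` and `a / S ≤ C₂ / (M - 1)`, and `e^{C₃} ≤ E ≤ e^{C₄}`.
-/

open scoped BigOperators

/-- Softmax jump bound for exponential weight functions: under bounded ratios between the
exponential weights, a bounded increase of the `i`-th queue combined with non-increases of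
the other queues forces the `i`-th softmax weight to jump by a fixed positive amount. -/
theorem stmt_11 (M : ℕ) (hM : 2 ≤ M) (i : Fin M) (q Δq : Fin M → ℝ)
    (C₁ C₂ C₃ C₄ : ℝ) (hC₁ : 0 < C₁) (hC₂ : 0 < C₂) (hC₃ : 0 < C₃) (hC₃₄ : C₃ ≤ C₄)
    (hratio : ∀ j, j ≠ i → C₁ ≤ Real.exp (q i - q j) ∧ Real.exp (q i - q j) ≤ C₂)
    (hΔi : C₃ ≤ Δq i ∧ Δq i ≤ C₄)
    (hΔj : ∀ j, j ≠ i → Δq j ≤ 0) :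
    Real.exp (q i + Δq i) / (∑ j, Real.exp (q j + Δq j)) -
        Real.exp (q i) / (∑ j, Real.exp (q j)) ≥
      (Real.exp C₃ - 1) /
        ((Real.exp C₄ + ((M : ℝ) - 1) / C₁) * (C₂ / ((M : ℝ) - 1) + 1)) := by
  have hm : (0 : ℝ) < (M : ℝ) - 1 := by
    have : (2 : ℝ) ≤ M := by exact_mod_cast hM
    linarith
  have hcard : ((Finset.univ.erase i).card : ℝ) = (M : ℝ) - 1 := by
    rw [Finset.card_erase_of_mem (Finset.mem_univ i), Finset.card_univ, Fintype.card_fin,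
      Nat.cast_sub (by omega), Nat.cast_one]
  rw [← Finset.add_sum_erase Finset.univ (fun j => Real.exp (q j + Δq j)) (Finset.mem_univ i),
    ← Finset.add_sum_erase Finset.univ (fun j => Real.exp (q j)) (Finset.mem_univ i)]
  have hT : ∑ j ∈ Finset.univ.erase i, Real.exp (q j + Δq j)
      ≤ ∑ j ∈ Finset.univ.erase i, Real.exp (q j) := by
    refine Finset.sum_le_sum fun j hj => Real.exp_le_exp.mpr ?_
    linarith [hΔj j (Finset.ne_of_mem_erase hj)]
  have hT0 : 0 ≤ ∑ j ∈ Finset.univ.erase i, Real.exp (q j + Δq j) :=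
    Finset.sum_nonneg fun j _ => (Real.exp_pos _).le
  have hS₁ : (∑ j ∈ Finset.univ.erase i, Real.exp (q j)) * C₁ ≤ ((M : ℝ) - 1) * Real.exp (q i) := by
    rw [← hcard, Finset.sum_mul, ← nsmul_eq_mul]
    refine Finset.sum_le_card_nsmul _ _ _ fun j hj => ?_
    have h := (hratio j (Finset.ne_of_mem_erase hj)).1
    rw [Real.exp_sub, le_div_iff₀ (Real.exp_pos _)] at h
    linarith
  have hS₂ : ((M : ℝ) - 1) * Real.exp (q i) ≤ C₂ * ∑ j ∈ Finset.univ.erase i, Real.exp (q j) := by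
    rw [← hcard, Finset.mul_sum, ← nsmul_eq_mul]
    refine Finset.card_nsmul_le_sum _ _ _ fun j hj => ?_
    have h := (hratio j (Finset.ne_of_mem_erase hj)).2
    rwa [Real.exp_sub, div_le_iff₀ (Real.exp_pos _)] at h
  rw [Real.exp_add]
  generalize (∑ j ∈ Finset.univ.erase i, Real.exp (q j + Δq j)) = T at *
  generalize (∑ j ∈ Finset.univ.erase i, Real.exp (q j)) = S at *
  have ha := Real.exp_pos (q i)
  have hE3 := Real.exp_le_exp.mpr hΔi.1
  have hE4 := Real.exp_le_exp.mpr hΔi.2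
  have hC3 : 1 < Real.exp C₃ := Real.one_lt_exp_iff.mpr hC₃
  have hE := Real.exp_pos (Δq i)
  generalize Real.exp (q i) = a at *
  generalize Real.exp (Δq i) = E at *
  have hS : 0 < S := pos_of_mul_pos_right ((mul_pos hm ha).trans_le hS₂) hC₂.le
  have h1 : S / a ≤ ((M : ℝ) - 1) / C₁ := by
    rwa [div_le_div_iff₀ ha hC₁]
  have h2 : a / S ≤ C₂ / ((M : ℝ) - 1) := by
    rw [div_le_div_iff₀ hS hm]
    linarith
  calc (Real.exp C₃ - 1) / ((Real.exp C₄ + ((M : ℝ) - 1) / C₁) * (C₂ / ((M : ℝ) - 1) + 1))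
      ≤ (E - 1) / ((E + S / a) * (a / S + 1)) := by
        have : 0 ≤ E - 1 := by linarith
        gcongr
    _ = a * E / (a * E + S) - a / (a + S) := by
        field_simp
        ring
    _ ≤ a * E / (a * E + T) - a / (a + S) := by
        gcongr
end

section
/- Let M ≥ 1, let μ* ∈ ℝ^M, r*, ρ ∈ ℝ^M, θ > 0, and γ ∈ (0,1] satisfy μ*ᵀr* − μ*ᵀρ < γ·θ/2. Let (r̃^n)_{n≥1} be a sequence in ℝ^M such that μ*ᵀ(r̃^{2n−1} + r̃^{2n}) ≤ 2·μ*ᵀr* for every n ≥ 1, and suppose liminf_{N→∞} (1/N)·#{ n ∈ {1,…,N} : μ*ᵀ(r̃^{2n−1} + r̃^{2n}) ≤ 2·μ*ᵀr* − θ } ≥ γ. Then μ*ᵀ Σ_{n=1}^{2N} (ρ − r̃^n) → +∞ as N → ∞. -/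
/-!
Group the slots in pairs and let `p n` be the weighted rate of the `n`-th pair. Every
pair satisfies `p n ≤ 2 a` with `a = μ*ᵀr*`, and the bad pairs satisfy `p n ≤ 2 a - θ`, so
`∑ n ≤ N, p n ≤ 2 a N - θ * #bad` (`sum_le_of_bad_pairs`). Choosing `γ'` with
`2 (a - μ*ᵀρ) / θ < γ' < γ`, the liminf hypothesis gives `#bad ≥ γ' N` eventually, so the weighted
partial sum is at least `N * (θ γ' - 2 (a - μ*ᵀρ))`, which grows linearly.
-/

open scoped BigOperators

theorem sum_le_of_bad_pairs (p : ℕ → ℝ) (A θ : ℝ) (hp : ∀ n, 1 ≤ n → p n ≤ A) (N : ℕ) :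
    ∑ n ∈ Finset.Icc 1 N, p n ≤
      N * A - θ * (((Finset.Icc 1 N).filter (fun n => p n ≤ A - θ)).card : ℝ) := by
  have h : ∀ n ∈ Finset.Icc 1 N, p n ≤ A - (if p n ≤ A - θ then θ else 0) := by
    intro n hn
    split_ifs with h
    · exact h
    · simpa using hp n (Finset.mem_Icc.1 hn).1
  refine (Finset.sum_le_sum h).trans (le_of_eq ?_)
  rw [Finset.sum_sub_distrib, ← Finset.sum_filter]
  simp [mul_comm]

theorem weighted_sum_eq_sum_pairs {M : ℕ} (μ ρ : Fin M → ℝ) (r : ℕ → Fin M → ℝ) (N : ℕ) :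
    ∑ i, μ i * ∑ n ∈ Finset.Icc 1 (2 * N), (ρ i - r n i) =
      N * (2 * ∑ i, μ i * ρ i) -
        ∑ n ∈ Finset.Icc 1 N, ∑ i, μ i * (r (2 * n - 1) i + r (2 * n) i) := by
  induction N with
  | zero => simp
  | succ k ih =>
    have e : ∀ i, μ i * ∑ n ∈ Finset.Icc 1 (2 * (k + 1)), (ρ i - r n i) =
        μ i * ∑ n ∈ Finset.Icc 1 (2 * k), (ρ i - r n i) + 2 * (μ i * ρ i) -
          μ i * (r (2 * (k + 1) - 1) i + r (2 * (k + 1)) i) := by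
      intro i
      rw [show 2 * (k + 1) = 2 * k + 1 + 1 by ring, Finset.sum_Icc_succ_top (by omega),
        Finset.sum_Icc_succ_top (by omega)]
      simp only [Nat.add_sub_cancel]
      ring
    rw [Finset.sum_congr rfl fun i _ => e i, Finset.sum_sub_distrib, Finset.sum_add_distrib, ih,
      ← Finset.mul_sum, Finset.sum_Icc_succ_top (by omega)]
    push_cast
    ring

/-- Core of the first necessity case: if the expected rate allocations over pairs of
consecutive slots lose at least `θ` of the maximal weighted sum rate `μ*ᵀr*` on a long-run
fraction at least `γ` of pairs, and `μ*ᵀr* - μ*ᵀρ < γθ/2`, then the weighted partial sums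
`μ*ᵀ ∑ (ρ - r̃ⁿ)` diverge to `+∞`. -/
theorem stmt_17 (M : ℕ) (hM : 1 ≤ M) (μStar rStar ρ : Fin M → ℝ) (θ γ : ℝ)
    (hθ : 0 < θ) (hγ : γ ∈ Set.Ioc (0 : ℝ) 1)
    (hρ : (∑ i, μStar i * rStar i) - (∑ i, μStar i * ρ i) < γ * θ / 2)
    (r : ℕ → Fin M → ℝ)
    (hr : ∀ n : ℕ, 1 ≤ n →
      (∑ i, μStar i * (r (2 * n - 1) i + r (2 * n) i)) ≤ 2 * ∑ i, μStar i * rStar i)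
    (hfrac : γ ≤ Filter.liminf (fun N : ℕ =>
      ((((Finset.Icc 1 N).filter (fun n =>
        (∑ i, μStar i * (r (2 * n - 1) i + r (2 * n) i)) ≤
          2 * (∑ i, μStar i * rStar i) - θ)).card : ℝ) / (N : ℝ))) Filter.atTop) :
    Filter.Tendsto
      (fun N : ℕ => ∑ i, μStar i * ∑ n ∈ Finset.Icc 1 (2 * N), (ρ i - r n i))
      Filter.atTop Filter.atTop := by
  obtain ⟨γ', h1, h2⟩ :
      ∃ γ', 2 * ((∑ i, μStar i * rStar i) - ∑ i, μStar i * ρ i) / θ < γ' ∧ γ' < γ :=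
    exists_between (by rw [div_lt_iff₀ hθ]; linarith)
  rw [div_lt_iff₀ hθ] at h1
  -- The liminf is taken in `ℝ`, so extracting an eventual bound needs a lower bound (here `0`).
  have hev := Filter.eventually_lt_of_lt_liminf (lt_of_lt_of_le h2 hfrac)
    (Filter.isBoundedUnder_of ⟨0, fun N => by positivity⟩)
  refine Filter.tendsto_atTop_mono' Filter.atTop ?_
    ((tendsto_natCast_atTop_atTop (R := ℝ)).atTop_mul_const (sub_pos.2 h1))
  filter_upwards [hev, Filter.eventually_gt_atTop 0] with N hN hpos
  have hpos' : (0 : ℝ) < N := by exact_mod_cast hpos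
  rw [lt_div_iff₀ hpos'] at hN
  rw [weighted_sum_eq_sum_pairs]
  have hs := sum_le_of_bad_pairs
    (fun n => ∑ i, μStar i * (r (2 * n - 1) i + r (2 * n) i)) _ θ hr N
  have hm := mul_le_mul_of_nonneg_left hN.le hθ.le
  linarith
end

section
/- Let M ≥ 1 and let μ̄ : ℝ₊^M → ℝ₊^M satisfy Condition 1 and Condition 2. Let D > 0 and let ε : ℝ₊^M → ℝ^M satisfy ‖ε(q)‖ ≤ D and q + ε(q) ∈ ℝ₊^M for every q ∈ ℝ₊^M. Then the perturbed weight map μ̃(q) := μ̄(q + ε(q)) also satisfies Condition 1 and Condition 2. -/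
/-!
A bounded perturbation moves the base point `q` to `p = q + e q` with `‖p‖ ≥ ‖q‖ - D`, so `‖q‖ > B + D`
forces `‖p‖ > B`. For Condition 1, the displacement between the perturbed points of `q` and `q + Δq` is
`Δq + e (q + Δq) - e q`, of norm less than `C + 2 * D`; for Condition 2, `q i < C` gives `p i < C + D`.
Hence each condition for `μ` with the enlarged constant yields the same condition for the perturbed map.
-/

open scoped BigOperators

/-- Condition 1 for a weight map on the nonnegative orthant of `ℝ^M`. -/
def Condition1 (M : ℕ) (μ : EuclideanSpace ℝ (Fin M) → Fin M → ℝ) : Prop :=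
  ∀ ε ∈ Set.Ioo (0 : ℝ) 1, ∀ C > (0 : ℝ), ∃ B > (0 : ℝ),
    ∀ i : Fin M, ∀ q : EuclideanSpace ℝ (Fin M), (∀ j, 0 ≤ q j) → ‖q‖ > B →
      ∀ Δq : EuclideanSpace ℝ (Fin M), ‖Δq‖ < C → (∀ j, 0 ≤ q j + Δq j) →
        |μ (q + Δq) i - μ q i| ≤ ε

/-- Condition 2 for a weight map on the nonnegative orthant of `ℝ^M`. -/
def Condition2 (M : ℕ) (μ : EuclideanSpace ℝ (Fin M) → Fin M → ℝ) : Prop :=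
  ∀ ε ∈ Set.Ioo (0 : ℝ) 1, ∀ C > (0 : ℝ), ∃ B > (0 : ℝ),
    ∀ i : Fin M, ∀ q : EuclideanSpace ℝ (Fin M), (∀ j, 0 ≤ q j) → ‖q‖ > B →
      q i < C → μ q i ≤ ε

/-- Conditions 1 and 2 are preserved under bounded perturbations of the queue state
(imperfect queue state information). -/
theorem stmt_18 (M : ℕ) (hM : 1 ≤ M)
    (μ : EuclideanSpace ℝ (Fin M) → Fin M → ℝ)
    (h1 : Condition1 M μ) (h2 : Condition2 M μ)
    (D : ℝ) (hD : 0 < D) (e : EuclideanSpace ℝ (Fin M) → EuclideanSpace ℝ (Fin M))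
    (he : ∀ q : EuclideanSpace ℝ (Fin M), (∀ j, 0 ≤ q j) →
      ‖e q‖ ≤ D ∧ (∀ j, 0 ≤ q j + e q j)) :
    Condition1 M (fun q => μ (q + e q)) ∧ Condition2 M (fun q => μ (q + e q)) := by
  have far : ∀ B : ℝ, ∀ q : EuclideanSpace ℝ (Fin M), (∀ j, 0 ≤ q j) → ‖q‖ > B + D →
      ‖q + e q‖ > B := by
    intro B q hq hqB
    have h := norm_sub_le (q + e q) (e q)
    rw [add_sub_cancel_right] at h
    linarith [(he q hq).1]
  constructor
  · intro ε hε C hC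
    obtain ⟨B, hB, H⟩ := h1 ε hε (C + 2 * D) (by linarith)
    refine ⟨B + D, by linarith, fun i q hq hqB Δq hΔ hqΔ => ?_⟩
    obtain ⟨hn', hp'⟩ := he (q + Δq) hqΔ
    obtain ⟨hn, hp⟩ := he q hq
    have key : q + e q + (Δq + e (q + Δq) - e q) = q + Δq + e (q + Δq) := by abel
    have hnorm : ‖Δq + e (q + Δq) - e q‖ < C + 2 * D := by
      linarith [norm_sub_le (Δq + e (q + Δq)) (e q), norm_add_le Δq (e (q + Δq))]
    have h := H i (q + e q) hp (far B q hq hqB) _ hnorm (fun j => by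
      rw [← PiLp.add_apply, key]
      exact hp' j)
    rwa [key] at h
  · intro ε hε C hC
    obtain ⟨B, hB, H⟩ := h2 ε hε (C + D) (by linarith)
    refine ⟨B + D, by linarith, fun i q hq hqB hqi => ?_⟩
    obtain ⟨hn, hp⟩ := he q hq
    refine H i (q + e q) hp (far B q hq hqB) ?_
    have h := (le_abs_self (e q i)).trans (PiLp.norm_apply_le (e q) i)
    rw [PiLp.add_apply]
    linarith
end
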